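/- arXiv:0708.2684 — 2 statements merged into one kernel-verified Lean document; each statement's English description precedes it below -/
import Mathlib

section
/- Let a > b > 0 and Ω = { x + iy : x²/a² + y²/b² ≤ 1 } ⊂ ℂ. Then for every z in the open interior { x + iy : x²/a² + y²/b² < 1 }, (1/π) ∫_Ω 1/(z − ζ) dA(ζ) = conj(z) − ((a − b)/(a + b)) z. -/
open Complex MeasureTheory

/-!
Write the ellipse as the image of the unit disc under `L w = p w + q w̄` with `p = (a + b) / 2` and
`q = (a - b) / 2`. For `z = L v`, the change of variables `ζ = L w` turns the Cauchy kernel into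
`1 / L (v - w)` on the disc. In polar coordinates around `v` this kernel, homogeneous of degree
`-1`, cancels the Jacobian, so the integral becomes `2π` times the mean over unit vectors `u` of
`-1 / L u` times the distance from `v` to the unit circle in the direction `u`. That distance is
`-⟪v, u⟫` plus an even function of `u`, and the even part is killed by the odd kernel. What remains,
the mean of `⟪v, u⟫ / L u`, is the mean of a function of `u⁻¹` holomorphic on the closed disc, hence
its value `v̄ / (2 p)` at the origin. Expressing `v̄` through `z = L v` gives the formula.
-/

open Metric Real Set InnerProductSpace
open scoped ComplexConjugate

section PolarCoordinates

variable {E : Type*} [NormedAddCommGroup E] [NormedSpace ℝ E]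

theorem two_pi_smul_circleAverage (f : ℂ → E) (c : ℂ) (r : ℝ) :
    (2 * π) • circleAverage f c r = ∫ θ in Ioo (-π) π, f (circleMap c r θ) := by
  rw [circleAverage_eq_integral_add (-π), smul_inv_smul₀ two_pi_pos.ne',
    intervalIntegral.integral_comp_add_right (fun θ ↦ f (circleMap c r θ)),
    intervalIntegral.integral_of_le (by linarith [pi_pos]), integral_Ioc_eq_integral_Ioo]
  ring_nf

variable [CompleteSpace E]

theorem setIntegral_Ioi_indicator_Iic_const {c : ℝ} (hc : 0 ≤ c) (e : E) :
    ∫ r in Ioi 0, (Iic c).indicator (fun _ ↦ e) r = c • e := by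
  rw [setIntegral_indicator measurableSet_Iic, Ioi_inter_Iic, setIntegral_const,
    Real.volume_real_Ioc_of_le hc, sub_zero]

theorem integral_indicator_Iic_snd {α : Type*} [MeasurableSpace α] {μ : Measure α} [SFinite μ]
    {R : α → ℝ} {g : α → E} (hR : Measurable R) (hR₀ : ∀ x, 0 ≤ R x)
    (hg : AEStronglyMeasurable g μ) (hRg : Integrable (fun x ↦ R x • g x) μ) :
    ∫ p : ℝ × α, (Iic (R p.2)).indicator (fun _ ↦ g p.2) p.1 ∂(volume.restrict (Ioi 0)).prod μ =
      ∫ x, R x • g x ∂μ := by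
  have measurable : AEStronglyMeasurable
      (fun p : ℝ × α ↦ (Iic (R p.2)).indicator (fun _ ↦ g p.2) p.1)
      ((volume.restrict (Ioi 0)).prod μ) :=
    hg.comp_snd.indicator (measurableSet_le measurable_fst (hR.comp measurable_snd))
  have integrable_slice (x : α) :
      IntegrableOn ((Iic (R x)).indicator fun _ ↦ g x) (Ioi 0) := by
    rw [IntegrableOn, integrable_indicator_iff measurableSet_Iic, IntegrableOn,
      Measure.restrict_restrict measurableSet_Iic, Iic_inter_Ioi]
    exact integrable_const _
  have integral_norm_slice (x : α) :
      ∫ r in Ioi 0, ‖(Iic (R x)).indicator (fun _ ↦ g x) r‖ = ‖R x • g x‖ := by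
    simp_rw [norm_indicator_eq_indicator_norm, setIntegral_Ioi_indicator_Iic_const (hR₀ x),
      norm_smul, norm_of_nonneg (hR₀ x), smul_eq_mul]
  rw [integral_prod_symm]
  · exact integral_congr_ae (.of_forall fun x ↦ setIntegral_Ioi_indicator_Iic_const (hR₀ x) (g x))
  · refine (integrable_prod_iff' measurable).2 ⟨.of_forall integrable_slice, ?_⟩
    simpa only [integral_norm_slice] using hRg.norm

theorem setIntegral_comp_sub_eq_circleAverage {K : ℂ → E} (hK : ContinuousOn K (sphere 0 1))
    (hK_smul : ∀ r : ℝ, 0 < r → ∀ u, K (r • u) = r⁻¹ • K u) {R : ℂ → ℝ}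
    (hR : ContinuousOn R (sphere 0 1)) (hR₀ : ∀ u ∈ sphere 0 1, 0 ≤ R u)
    {S : Set ℂ} (hS : MeasurableSet S) {z : ℂ}
    (hSR : ∀ u ∈ sphere 0 1, ∀ r > 0, z + r • u ∈ S ↔ r ≤ R u) :
    ∫ ζ in S, K (ζ - z) = (2 * π) • circleAverage (fun u ↦ R u • K u) 0 1 := by
  have circleMap_mem (θ : ℝ) : circleMap 0 1 θ ∈ sphere (0 : ℂ) 1 :=
    circleMap_mem_sphere 0 zero_le_one θ
  have hR_circle : Continuous fun θ ↦ R (circleMap 0 1 θ) :=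
    hR.comp_continuous (continuous_circleMap 0 1) circleMap_mem
  have hK_circle : Continuous fun θ ↦ K (circleMap 0 1 θ) :=
    hK.comp_continuous (continuous_circleMap 0 1) circleMap_mem
  have integrand_eq {p : ℝ × ℝ} (hp : p ∈ polarCoord.target) :
      p.1 • S.indicator (fun ζ ↦ K (ζ - z)) (z + Complex.polarCoord.symm p) =
        (Iic (R (circleMap 0 1 p.2))).indicator (fun _ ↦ K (circleMap 0 1 p.2)) p.1 := by
    have hr : 0 < p.1 := hp.1
    have polar_eq : Complex.polarCoord.symm p = p.1 • circleMap 0 1 p.2 := by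
      simp [circleMap, Complex.exp_mul_I, mul_add]
    classical
    simp only [polar_eq, indicator_apply, hSR _ (circleMap_mem p.2) p.1 hr, mem_Iic,
      add_sub_cancel_left, hK_smul _ hr, smul_ite, smul_inv_smul₀ hr.ne', smul_zero]
  rw [← integral_indicator hS, ← integral_add_left_eq_self _ z,
    ← Complex.integral_comp_polarCoord_symm,
    setIntegral_congr_fun polarCoord.open_target.measurableSet fun _ ↦ integrand_eq,
    polarCoord_target, Measure.volume_eq_prod, ← Measure.prod_restrict,
    integral_indicator_Iic_snd hR_circle.measurable (fun θ ↦ hR₀ _ (circleMap_mem θ))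
      hK_circle.aestronglyMeasurable, two_pi_smul_circleAverage]
  exact ((hR_circle.smul hK_circle).integrableOn_Icc (a := -π) (b := π)).mono_set
    Ioo_subset_Icc_self

end PolarCoordinates

section Chord

variable {E : Type*} [NormedAddCommGroup E] [InnerProductSpace ℝ E] {ρ r : ℝ} {v u : E}

/-- The distance from a point `v` of the ball of radius `ρ` about the origin to the boundary sphere,
measured along the ray from `v` in the direction of the unit vector `u`. -/
noncomputable def rayLength (ρ : ℝ) (v u : E) : ℝ :=
  √(⟪v, u⟫_ℝ ^ 2 + (ρ ^ 2 - ‖v‖ ^ 2)) - ⟪v, u⟫_ℝ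

theorem norm_add_smul_le_iff_le_rayLength (hv : ‖v‖ ≤ ρ) (hu : ‖u‖ = 1) (hr : 0 ≤ r) :
    ‖v + r • u‖ ≤ ρ ↔ r ≤ rayLength ρ v u := by
  have hρ : 0 ≤ ρ := (norm_nonneg v).trans hv
  have hvρ : 0 ≤ ρ ^ 2 - ‖v‖ ^ 2 := sub_nonneg.2 (by gcongr)
  set d := ⟪v, u⟫_ℝ ^ 2 + (ρ ^ 2 - ‖v‖ ^ 2) with hd
  have abs_inner_le : |⟪v, u⟫_ℝ| ≤ √d := abs_le_sqrt (by linarith)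
  have lower_bound : -√d ≤ r + ⟪v, u⟫_ℝ := by linarith [neg_le_of_abs_le abs_inner_le]
  have norm_sq : ‖v + r • u‖ ^ 2 = ‖v‖ ^ 2 + 2 * r * ⟪v, u⟫_ℝ + r ^ 2 := by
    rw [norm_add_sq_real, inner_smul_right, norm_smul, hu, mul_one, norm_eq_abs, sq_abs]
    ring
  calc
    ‖v + r • u‖ ≤ ρ ↔ ‖v + r • u‖ ^ 2 ≤ ρ ^ 2 := (sq_le_sq₀ (norm_nonneg _) hρ).symm
    _ ↔ (r + ⟪v, u⟫_ℝ) ^ 2 ≤ d := by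
      rw [norm_sq, hd]
      constructor <;> intro h <;> linarith
    _ ↔ -√d ≤ r + ⟪v, u⟫_ℝ ∧ r + ⟪v, u⟫_ℝ ≤ √d := Real.sq_le (by positivity)
    _ ↔ r ≤ rayLength ρ v u := by rw [and_iff_right lower_bound, rayLength, le_sub_iff_add_le]

theorem rayLength_nonneg (hv : ‖v‖ ≤ ρ) (hu : ‖u‖ = 1) : 0 ≤ rayLength ρ v u :=
  (norm_add_smul_le_iff_le_rayLength hv hu le_rfl).1 (by simpa using hv)

theorem continuous_rayLength (ρ : ℝ) (v : E) : Continuous (rayLength ρ v) := by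
  unfold rayLength
  fun_prop

theorem rayLength_neg (ρ : ℝ) (v u : E) :
    rayLength ρ v (-u) = rayLength ρ v u + 2 * ⟪v, u⟫_ℝ := by
  simp only [rayLength, inner_neg_right, neg_sq]
  ring

end Chord

section MeanValue

variable {E : Type*} [NormedAddCommGroup E] [NormedSpace ℝ E]

theorem circleAverage_eq_zero_of_odd {f : ℂ → E} {r : ℝ}
    (hf : ∀ u ∈ sphere 0 |r|, f (-u) = -f u) :
    circleAverage f 0 r = 0 := by
  have : circleAverage f 0 r = -circleAverage f 0 r := calc
    circleAverage f 0 r = circleAverage f 0 (-r) := circleAverage_neg_radius.symm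
    _ = circleAverage (fun u ↦ f (-u)) 0 r := by simp [circleAverage, circleMap]
    _ = circleAverage (fun u ↦ (-1 : ℝ) • f u) 0 r :=
      circleAverage_congr_sphere fun u hu ↦ by simpa using hf u hu
    _ = -circleAverage f 0 r := by rw [circleAverage_fun_smul, neg_one_smul]
  rwa [eq_neg_iff_add_eq_zero, ← two_smul ℝ, smul_eq_zero_iff_right two_ne_zero] at this

variable [CompleteSpace E]

theorem setIntegral_closedBall_comp_sub_eq_circleAverage {K : ℂ → E}
    (hK : ContinuousOn K (sphere 0 1)) (hK_smul : ∀ r : ℝ, r ≠ 0 → ∀ u, K (r • u) = r⁻¹ • K u)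
    {ρ : ℝ} {v : ℂ} (hv : ‖v‖ ≤ ρ) :
    ∫ w in closedBall 0 ρ, K (w - v) = -(2 * π) • circleAverage (fun u ↦ ⟪v, u⟫_ℝ • K u) 0 1 := by
  have rayLength_circleIntegrable : CircleIntegrable (fun u ↦ rayLength ρ v u • K u) 0 1 :=
    ((continuous_rayLength ρ v).continuousOn.smul hK).circleIntegrable zero_le_one
  have inner_circleIntegrable : CircleIntegrable (fun u ↦ ⟪v, u⟫_ℝ • K u) 0 1 :=
    (ContinuousOn.smul (by fun_prop) hK).circleIntegrable zero_le_one
  have average_add_eq_zero :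
      circleAverage (fun u ↦ rayLength ρ v u • K u + ⟪v, u⟫_ℝ • K u) 0 1 = 0 := by
    refine circleAverage_eq_zero_of_odd fun u _ ↦ ?_
    have K_neg : K (-u) = -K u := by simpa using hK_smul (-1) (by norm_num) u
    rw [K_neg, rayLength_neg, inner_neg_right]
    module
  rw [circleAverage_fun_add rayLength_circleIntegrable inner_circleIntegrable]
    at average_add_eq_zero
  rw [setIntegral_comp_sub_eq_circleAverage hK (fun r hr ↦ hK_smul r hr.ne')
    (continuous_rayLength ρ v).continuousOn (fun u hu ↦ rayLength_nonneg hv (by simpa using hu))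
    isClosed_closedBall.measurableSet, eq_neg_of_add_eq_zero_left average_add_eq_zero, smul_neg,
    neg_smul]
  intro u hu r hr
  rw [mem_closedBall_zero_iff,
    norm_add_smul_le_iff_le_rayLength hv (by simpa using hu) hr.le]

end MeanValue

section Ellipse

theorem add_mul_ne_zero_of_norm_lt {A : Type*} [NormedRing A] {p q ω : A} (h : ‖q‖ < ‖p‖)
    (hω : ‖ω‖ ≤ 1) : p + q * ω ≠ 0 := by
  intro h₀
  have norm_le : ‖p‖ ≤ ‖q‖ := calc
    ‖p‖ = ‖q * ω‖ := by rw [eq_neg_of_add_eq_zero_left h₀, norm_neg]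
    _ ≤ ‖q‖ * ‖ω‖ := norm_mul_le q ω
    _ ≤ ‖q‖ := mul_le_of_le_one_right (norm_nonneg q) hω
  exact norm_le.not_gt h

/-- The real-linear map `w ↦ p w + q w̄`. It carries circles to ellipses when `‖p‖ ≠ ‖q‖`, and
every real-linear endomorphism of `ℂ` has this form. -/
noncomputable def mulAddMulConj (p q : ℂ) : ℂ →L[ℝ] ℂ :=
  ContinuousLinearMap.mul ℝ ℂ p + (ContinuousLinearMap.mul ℝ ℂ q).comp conjCLE.toContinuousLinearMap

variable {p q : ℂ}

@[simp]
theorem mulAddMulConj_apply (p q w : ℂ) : mulAddMulConj p q w = p * w + q * conj w :=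
  rfl

theorem det_mulAddMulConj (p q : ℂ) : (mulAddMulConj p q).det = normSq p - normSq q := by
  have toMatrix_eq : LinearMap.toMatrix basisOneI basisOneI (mulAddMulConj p q) =
      !![p.re + q.re, -p.im + q.im; p.im + q.im, p.re - q.re] := by
    ext i j
    fin_cases i <;> fin_cases j <;> simp [LinearMap.toMatrix_apply, sub_eq_add_neg]
  rw [ContinuousLinearMap.det, ← LinearMap.det_toMatrix basisOneI, toMatrix_eq,
    Matrix.det_fin_two_of, normSq_apply, normSq_apply]
  ring

theorem conj_mul_mulAddMulConj_sub (p q w : ℂ) :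
    conj p * mulAddMulConj p q w - q * conj (mulAddMulConj p q w) =
      (normSq p - normSq q : ℝ) * w := by
  simp only [mulAddMulConj_apply, map_add, map_mul, conj_conj, ofReal_sub, normSq_eq_conj_mul_self]
  ring

theorem normSq_sub_normSq_pos (h : ‖q‖ < ‖p‖) : 0 < normSq p - normSq q := by
  rw [normSq_eq_norm_sq, normSq_eq_norm_sq]
  exact sub_pos.2 (by gcongr)

theorem mulAddMulConj_injective (h : ‖q‖ < ‖p‖) : Function.Injective (mulAddMulConj p q) := by
  refine (injective_iff_map_eq_zero _).2 fun w hw ↦ ?_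
  have scaled_eq_zero := (conj_mul_mulAddMulConj_sub p q w).symm
  rw [hw, map_zero, mul_zero, mul_zero, sub_zero] at scaled_eq_zero
  exact (mul_eq_zero_iff_left (ofReal_ne_zero.2 (normSq_sub_normSq_pos h).ne')).1 scaled_eq_zero

theorem circleAverage_inner_mul_inv_mulAddMulConj (h : ‖q‖ < ‖p‖) (v : ℂ) :
    circleAverage (fun u ↦ ⟪v, u⟫_ℝ • (mulAddMulConj p q u)⁻¹) 0 1 = conj v / (2 * p) := by
  set H : ℂ → ℂ := fun ω ↦ (conj v + v * ω ^ 2) / (2 * (p + q * ω ^ 2)) with hH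
  have denominator_ne_zero {ω : ℂ} (hω : ‖ω‖ ≤ 1) : p + q * ω ^ 2 ≠ 0 :=
    add_mul_ne_zero_of_norm_lt h (by simpa only [norm_pow] using pow_le_one₀ (norm_nonneg ω) hω)
  have H_differentiable : DifferentiableOn ℂ H (closedBall 0 1) := by
    intro ω hω
    have := mul_ne_zero two_ne_zero (denominator_ne_zero (mem_closedBall_zero_iff.1 hω))
    exact DifferentiableAt.differentiableWithinAt (by fun_prop (disch := assumption))
  have integrand_eq {u : ℂ} (hu : ‖u‖ = 1) :
      ⟪v, u⟫_ℝ • (mulAddMulConj p q u)⁻¹ = H u⁻¹ := by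
    have u_ne_zero : u ≠ 0 := norm_ne_zero_iff.1 (by simp [hu])
    have conj_u : conj u = u⁻¹ := (inv_eq_conj hu).symm
    have inner_eq : (⟪v, u⟫_ℝ : ℂ) = (conj v * u + v * u⁻¹) / 2 := by
      rw [Complex.inner, re_eq_add_conj, map_mul, conj_conj, conj_u, mul_comm u, mul_comm _ v]
    rw [real_smul, inner_eq, mulAddMulConj_apply, conj_u, hH]
    have := denominator_ne_zero (ω := u⁻¹) (by simp [hu])
    field_simp
  calc
    circleAverage (fun u ↦ ⟪v, u⟫_ℝ • (mulAddMulConj p q u)⁻¹) 0 1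
        = circleAverage (fun u ↦ H u⁻¹) 0 1 :=
      circleAverage_congr_sphere fun u hu ↦ integrand_eq (by simpa using hu)
    _ = circleAverage H 0 1 := circleAverage_zero_one_congr_inv
    _ = H 0 := DiffContOnCl.circleAverage (H_differentiable.diffContOnCl_ball (by simp))
    _ = conj v / (2 * p) := by simp [hH]

theorem setIntegral_closedBall_inv_mulAddMulConj (h : ‖q‖ < ‖p‖) {ρ : ℝ} {v : ℂ} (hv : ‖v‖ ≤ ρ) :
    ∫ w in closedBall 0 ρ, (mulAddMulConj p q (v - w))⁻¹ = π * (conj v / p) := by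
  have ne_zero {u : ℂ} (hu : u ∈ sphere 0 1) : mulAddMulConj p q u ≠ 0 :=
    (map_ne_zero_iff _ (mulAddMulConj_injective h)).2 (ne_zero_of_mem_unit_sphere ⟨u, hu⟩)
  have kernel_continuousOn : ContinuousOn (fun u ↦ (mulAddMulConj p q u)⁻¹) (sphere 0 1) :=
    (mulAddMulConj p q).continuous.continuousOn.inv₀ fun u ↦ ne_zero
  have kernel_smul (r : ℝ) (_ : r ≠ 0) (u : ℂ) :
      (mulAddMulConj p q (r • u))⁻¹ = r⁻¹ • (mulAddMulConj p q u)⁻¹ := by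
    rw [map_smul, smul_inv₀]
  have kernel_sub_rev (w : ℂ) :
      (mulAddMulConj p q (v - w))⁻¹ = -(mulAddMulConj p q (w - v))⁻¹ := by
    rw [← neg_sub w v, map_neg, inv_neg]
  simp_rw [kernel_sub_rev]
  rw [integral_neg,
    setIntegral_closedBall_comp_sub_eq_circleAverage kernel_continuousOn kernel_smul hv,
    circleAverage_inner_mul_inv_mulAddMulConj h, neg_smul, neg_neg, real_smul]
  push_cast
  ring

theorem setIntegral_image_closedBall_inv_sub (h : ‖q‖ < ‖p‖) {ρ : ℝ} {z : ℂ}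
    (hz : z ∈ mulAddMulConj p q '' closedBall 0 ρ) :
    ∫ ζ in mulAddMulConj p q '' closedBall 0 ρ, (z - ζ)⁻¹ = π * (conj z - conj q / p * z) := by
  obtain ⟨v, hv, rfl⟩ := hz
  have p_ne_zero : p ≠ 0 := norm_pos_iff.1 ((norm_nonneg q).trans_lt h)
  have conj_v := congrArg conj (conj_mul_mulAddMulConj_sub p q v)
  simp only [map_sub, map_mul, conj_conj, conj_ofReal] at conj_v
  rw [integral_image_eq_integral_abs_det_fderiv_smul volume isClosed_closedBall.measurableSet
    (fun _ _ ↦ (mulAddMulConj p q).hasFDerivWithinAt) (mulAddMulConj_injective h).injOn,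
    det_mulAddMulConj, abs_of_pos (normSq_sub_normSq_pos h), integral_smul]
  simp_rw [← map_sub]
  rw [setIntegral_closedBall_inv_mulAddMulConj h (mem_closedBall_zero_iff.1 hv), real_smul,
    mul_left_comm, ← mul_div_assoc, ← conj_v]
  field_simp

theorem mulAddMulConj_image_closedBall {a b : ℝ} (ha : a ≠ 0) (hb : b ≠ 0) :
    mulAddMulConj ((a + b) / 2 : ℝ) ((a - b) / 2 : ℝ) '' closedBall 0 1 =
      {ζ : ℂ | ζ.re ^ 2 / a ^ 2 + ζ.im ^ 2 / b ^ 2 ≤ 1} := by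
  have apply_eq (w : ℂ) :
      mulAddMulConj ((a + b) / 2 : ℝ) ((a - b) / 2 : ℝ) w = ⟨a * w.re, b * w.im⟩ := by
    apply Complex.ext <;>
      simp only [mulAddMulConj_apply, add_re, add_im, mul_re, mul_im, ofReal_re, ofReal_im,
        conj_re, conj_im] <;>
      ring
  have mem_closedBall_iff (w : ℂ) : w ∈ closedBall (0 : ℂ) 1 ↔ w.re ^ 2 + w.im ^ 2 ≤ 1 := by
    rw [mem_closedBall_zero_iff, ← sq_le_one_iff₀ (norm_nonneg w), ← normSq_eq_norm_sq,
      normSq_apply, sq, sq]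
  ext ζ
  constructor
  · rintro ⟨w, hw, rfl⟩
    rw [apply_eq]
    simpa [mul_pow, ha, hb] using (mem_closedBall_iff w).1 hw
  · intro hζ
    refine ⟨⟨ζ.re / a, ζ.im / b⟩, (mem_closedBall_iff _).2 (by simpa [div_pow] using hζ), ?_⟩
    rw [apply_eq, mul_div_cancel₀ _ ha, mul_div_cancel₀ _ hb]

end Ellipse

theorem cauchy_transform_ellipse_inside_general {a b : ℝ} (ha : 0 < a) (hb : 0 < b) {z : ℂ}
    (hz : z.re ^ 2 / a ^ 2 + z.im ^ 2 / b ^ 2 ≤ 1) :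
    (π : ℂ)⁻¹ * (∫ ζ in {p : ℂ | p.re ^ 2 / a ^ 2 + p.im ^ 2 / b ^ 2 ≤ 1}, (z - ζ)⁻¹)
      = conj z - (((a - b) / (a + b) : ℝ) : ℂ) * z := by
  have norm_lt : ‖(((a - b) / 2 : ℝ) : ℂ)‖ < ‖(((a + b) / 2 : ℝ) : ℂ)‖ := by
    rw [norm_real, norm_real, norm_of_nonneg (by positivity : 0 ≤ (a + b) / 2), norm_eq_abs, abs_lt]
    constructor <;> linarith
  have ratio : conj (((a - b) / 2 : ℝ) : ℂ) / ((a + b) / 2 : ℝ) = ((a - b) / (a + b) : ℝ) := by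
    rw [conj_ofReal, ← ofReal_div, div_div_div_cancel_right₀ two_ne_zero]
  rw [← mulAddMulConj_image_closedBall ha.ne' hb.ne', setIntegral_image_closedBall_inv_sub norm_lt
    (mulAddMulConj_image_closedBall ha.ne' hb.ne' ▸ hz), ratio,
    inv_mul_cancel_left₀ (ofReal_ne_zero.2 pi_ne_zero)]

/-- The Cauchy transform of the uniform density `1/π` on the ellipse with semi-axes
`a > b > 0`, evaluated at an interior point `z`, equals `conj z - ((a-b)/(a+b)) z`. -/
theorem cauchy_transform_ellipse_inside
    (a b : ℝ) (hb : 0 < b) (hab : b < a)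
    (Ω : Set ℂ) (hΩ : Ω = {p : ℂ | p.re ^ 2 / a ^ 2 + p.im ^ 2 / b ^ 2 ≤ 1})
    (z : ℂ) (hz : z.re ^ 2 / a ^ 2 + z.im ^ 2 / b ^ 2 < 1) :
    (Real.pi : ℂ)⁻¹ * (∫ ζ in Ω, (z - ζ)⁻¹)
      = starRingEnd ℂ z - (((a - b) / (a + b) : ℝ) : ℂ) * z := by
  rw [hΩ]
  exact cauchy_transform_ellipse_inside_general (hb.trans hab) hb hz.le
end

section
/- Let a > b > 0, c = √(a² − b²), and Ω = { x + iy : x²/a² + y²/b² ≤ 1 } ⊂ ℂ. Let g : ℂ \ [−c, c] → ℂ be holomorphic with g(z)² = z² − c² for all z and g(x) > 0 for all real x > c. Then for every z ∈ ℂ with z ∉ Ω, (1/π) ∫_Ω 1/(z − ζ) dA(ζ) = (2ab/c²) (z − g(z)). -/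
open Complex MeasureTheory

/-!
Write `z = ((a + b) / 2) u + ((a - b) / 2) / u` with `|u| > 1`; then
`√(z² - c²) = ((a + b) / 2) u - ((a - b) / 2) / u`, the same expression with `a` and `b` exchanged.
By Cauchy's integral formula in the variable `w = e^{iθ}`, the mean of `1 / (z - ζ)` over the
boundary points `ζ = a cos θ + i b sin θ` is `1 / √(z² - c²)`. Slicing `Ω` into the homothetic
ellipses `r ∂Ω` with focal distances `r c` gives
`(1/π) ∫_Ω dA(ζ) / (z - ζ) = 2ab ∫₀¹ r dr / √(z² - r²c²) = 2ab / (z + √(z² - c²))`,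
and the last expression is `(2ab / c²) (z - √(z² - c²))` after rationalising.
-/

open Set Metric
open scoped Real ComplexConjugate

section Polar

variable {E : Type*} [NormedAddCommGroup E] [NormedSpace ℝ E]

lemma setIntegral_Ioo_circleMap (f : ℂ → E) (r : ℝ) :
    ∫ θ in Ioo (-π) π, f (circleMap 0 r θ) = (2 * π) • Real.circleAverage f 0 r := by
  rw [Real.circleAverage_eq_integral_add (-π), smul_inv_smul₀ Real.two_pi_pos.ne',
    intervalIntegral.integral_comp_add_right (fun θ ↦ f (circleMap 0 r θ)),
    intervalIntegral.integral_of_le (by linarith [Real.pi_pos]), integral_Ioc_eq_integral_Ioo]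
  ring_nf

lemma setIntegral_closedBall_eq_setIntegral_circleMap (f : ℂ → E) (R : ℝ) :
    ∫ w in closedBall 0 R, f w =
      ∫ p in Ioc 0 R ×ˢ Ioo (-π) π, p.1 • f (circleMap 0 p.1 p.2) := by
  rw [← integral_indicator isClosed_closedBall.measurableSet,
    ← Complex.integral_comp_polarCoord_symm,
    ← integral_indicator polarCoord.open_target.measurableSet,
    ← integral_indicator (measurableSet_Ioc.prod measurableSet_Ioo)]
  congr 1 with ⟨r, θ⟩
  have hpolar : Complex.polarCoord.symm (r, θ) = circleMap 0 r θ := by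
    simp [circleMap, exp_mul_I]
  by_cases hr : 0 < r
  · by_cases hrR : r ≤ R <;> simp [indicator, hpolar, hr, hrR, abs_of_pos hr]
  · simp [hr]

lemma setIntegral_closedBall_eq_integral_circleAverage {f : ℂ → E} {R : ℝ} (hR : 0 ≤ R)
    (hf : ContinuousOn f (closedBall 0 R)) :
    ∫ w in closedBall 0 R, f w = ∫ r in 0..R, (2 * π * r) • Real.circleAverage f 0 r := by
  have hcont : ContinuousOn (fun p : ℝ × ℝ ↦ p.1 • f (circleMap 0 p.1 p.2))
      (Icc 0 R ×ˢ Icc (-π) π) := by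
    refine continuousOn_fst.smul (hf.comp (Continuous.continuousOn ?_) fun p hp ↦ ?_)
    · unfold circleMap; fun_prop
    · simpa [abs_of_nonneg hp.1.1] using hp.1.2
  have hint : IntegrableOn (fun p : ℝ × ℝ ↦ p.1 • f (circleMap 0 p.1 p.2))
      (Ioc 0 R ×ˢ Ioo (-π) π) :=
    (hcont.integrableOn_compact (isCompact_Icc.prod isCompact_Icc)).mono_set
      (prod_mono Ioc_subset_Icc_self Ioo_subset_Icc_self)
  rw [setIntegral_closedBall_eq_setIntegral_circleMap, Measure.volume_eq_prod,
    setIntegral_prod _ hint, intervalIntegral.integral_of_le hR]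
  refine setIntegral_congr_fun measurableSet_Ioc fun r _ ↦ ?_
  simp only [integral_smul, setIntegral_Ioo_circleMap, smul_smul]
  ring_nf

end Polar

section Radial

lemma sq_mem_slitPlane_of_re_pos {w : ℂ} (hw : 0 < w.re) : w ^ 2 ∈ slitPlane := by
  rw [mem_slitPlane_iff, sq, mul_re, mul_im]
  rcases eq_or_ne w.im 0 with him | him
  · left
    nlinarith
  · right
    have := mul_ne_zero hw.ne' him
    contrapose! this
    linarith

lemma complex_sqrt_ne_zero {w : ℂ} (hw : w ≠ 0) : Complex.sqrt w ≠ 0 := by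
  simp [Complex.sqrt, cpow_eq_zero_iff, hw]

lemma one_add_complex_sqrt_ne_zero (w : ℂ) : 1 + Complex.sqrt w ≠ 0 := by
  have hre : 0 ≤ (Complex.sqrt w).re := by
    rw [Complex.sqrt, cpow_inv_two_re]
    exact Real.sqrt_nonneg _
  intro h
  have h_re := congrArg re h
  rw [add_re, one_re, zero_re] at h_re
  linarith

lemma cpow_neg_half_eq_inv_sqrt (w : ℂ) : w ^ (-1 / 2 : ℂ) = (Complex.sqrt w)⁻¹ := by
  rw [Complex.sqrt, neg_div, cpow_neg, one_div]

variable {κ : ℂ}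

lemma one_sub_mul_sq_mem_slitPlane (hκ : 1 - κ ∈ slitPlane) {r : ℝ} (hr : r ∈ Icc (0 : ℝ) 1) :
    1 - κ * r ^ 2 ∈ slitPlane := by
  have h := starConvex_one_slitPlane hκ (sub_nonneg.2 (pow_le_one₀ hr.1 hr.2)) (sq_nonneg r)
    (sub_add_cancel 1 (r ^ 2))
  convert h using 1
  simp only [real_smul, ofReal_sub, ofReal_one, ofReal_pow, mul_one]
  ring

-- For `κ ≠ 0` this primitive is `(1 - √(1 - κs²)) / κ`; the form below also covers `κ = 0`.
lemma hasDerivAt_sq_div_one_add_sqrt {s : ℂ} (hs : 1 - κ * s ^ 2 ∈ slitPlane) :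
    HasDerivAt (fun s ↦ s ^ 2 / (1 + Complex.sqrt (1 - κ * s ^ 2)))
      (s / Complex.sqrt (1 - κ * s ^ 2)) s := by
  have hinner : HasDerivAt (fun s : ℂ ↦ 1 - κ * s ^ 2) (-(κ * (2 * s))) s := by
    simpa using ((hasDerivAt_pow 2 s).const_mul κ).const_sub 1
  have hsqrt := ((hasDerivAt_sqrt hs).comp s hinner).const_add 1
  have hne := one_add_complex_sqrt_ne_zero (1 - κ * s ^ 2)
  have hroot : Complex.sqrt (1 - κ * s ^ 2) ^ 2 = 1 - κ * s ^ 2 := cpow_ofNat_inv_pow _ 2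
  have hroot_ne := complex_sqrt_ne_zero (slitPlane_ne_zero hs)
  refine ((hasDerivAt_pow 2 s).div hsqrt hne).congr_deriv ?_
  rw [Function.comp_apply, cpow_neg_half_eq_inv_sqrt]
  generalize Complex.sqrt (1 - κ * s ^ 2) = ρ at *
  field_simp
  linear_combination s * hroot

lemma integral_div_sqrt_one_sub_mul_sq (hκ : 1 - κ ∈ slitPlane) :
    ∫ r in (0 : ℝ)..1, (r : ℂ) / Complex.sqrt (1 - κ * r ^ 2) = (1 + Complex.sqrt (1 - κ))⁻¹ := by
  have hmem : ∀ r ∈ uIcc (0 : ℝ) 1, 1 - κ * r ^ 2 ∈ slitPlane := fun r hr ↦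
    one_sub_mul_sq_mem_slitPlane hκ (uIcc_of_le (zero_le_one' ℝ) ▸ hr)
  have hcont : ContinuousOn (fun r : ℝ ↦ (r : ℂ) / Complex.sqrt (1 - κ * r ^ 2)) (uIcc 0 1) := by
    refine continuous_ofReal.continuousOn.div (fun r hr ↦ ?_) fun r hr ↦
      complex_sqrt_ne_zero (slitPlane_ne_zero (hmem r hr))
    exact ((differentiableAt_sqrt (hmem r hr)).continuousAt.comp
      (f := fun r : ℝ ↦ 1 - κ * (r : ℂ) ^ 2) (by fun_prop)).continuousWithinAt
  rw [intervalIntegral.integral_eq_sub_of_hasDerivAt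
    (fun r hr ↦ (hasDerivAt_sq_div_one_add_sqrt (hmem r hr)).comp_ofReal) hcont.intervalIntegrable]
  simp

end Radial

/-- The real-linear map `x + iy ↦ ax + iby`, written in terms of `w` and `conj w`, which on the unit
circle turns it into the Joukowski map. -/
noncomputable def axisScale (a b : ℝ) : ℂ →L[ℝ] ℂ :=
  ((a + b) / 2) • ContinuousLinearMap.id ℝ ℂ + ((a - b) / 2) • (conjCLE : ℂ →L[ℝ] ℂ)

lemma axisScale_apply (a b : ℝ) (w : ℂ) :
    axisScale a b w = ((a + b) / 2 : ℝ) * w + ((a - b) / 2 : ℝ) * conj w := by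
  simp [axisScale]

lemma axisScale_re (a b : ℝ) (w : ℂ) : (axisScale a b w).re = a * w.re := by
  rw [axisScale_apply, add_re, re_ofReal_mul, re_ofReal_mul, conj_re]
  ring

lemma axisScale_im (a b : ℝ) (w : ℂ) : (axisScale a b w).im = b * w.im := by
  rw [axisScale_apply, add_im, im_ofReal_mul, im_ofReal_mul, conj_im]
  ring

lemma axisScale_mul_mul (a b r : ℝ) (w : ℂ) :
    axisScale (r * a) (r * b) w = axisScale a b (r * w) := by
  simp only [axisScale_apply, map_mul, conj_ofReal]
  push_cast
  ring

lemma det_axisScale (a b : ℝ) : (axisScale a b).det = a * b := by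
  rw [ContinuousLinearMap.det, ← LinearMap.det_toMatrix basisOneI, Matrix.det_fin_two]
  simp [LinearMap.toMatrix_apply, axisScale_re, axisScale_im]

/-- The closed region bounded by the ellipse with semi-axes `a` and `b` along the real and imaginary
axes, in either order of size; degenerate if `a = 0` or `b = 0` (division by zero). -/
def ellipse (a b : ℝ) : Set ℂ := {p | p.re ^ 2 / a ^ 2 + p.im ^ 2 / b ^ 2 ≤ 1}

lemma zero_mem_ellipse (a b : ℝ) : (0 : ℂ) ∈ ellipse a b := by simp [ellipse]

lemma ellipse_mono {a b a' b' : ℝ} (ha : 0 < a) (haa' : a ≤ a') (hb : 0 < b) (hbb' : b ≤ b') :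
    ellipse a b ⊆ ellipse a' b' := by
  intro p hp
  refine le_trans ?_ (show p.re ^ 2 / a ^ 2 + p.im ^ 2 / b ^ 2 ≤ 1 from hp)
  gcongr

/-- The Joukowski map with semi-axes `a` and `b`: the rational map that agrees with `axisScale a b`
on the unit circle. For positive `a` and `b` it maps `{u | 1 < ‖u‖}` onto the complement of
`ellipse a b`. -/
noncomputable def joukowski (a b : ℝ) (u : ℂ) : ℂ := (a + b) / 2 * u + (a - b) / 2 / u

/-- The branch of `√(z² - k)` that is asymptotic to `z` at infinity, cut along the segment joining
the two square roots of `k`. -/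
noncomputable def sqrtSqSub (k z : ℂ) : ℂ := z * Complex.sqrt (1 - k / z ^ 2)

lemma isPreconnected_setOf_lt_norm {r : ℝ} (hr : 0 < r) : IsPreconnected {u : ℂ | r < ‖u‖} := by
  have himage : exp '' {v | Real.log r < v.re} = {u : ℂ | r < ‖u‖} := by
    ext u
    constructor
    · rintro ⟨v, hv, rfl⟩
      simpa [norm_exp] using (Real.log_lt_iff_lt_exp hr).1 hv
    · intro hu
      have hu0 : u ≠ 0 := norm_pos_iff.1 (hr.trans hu)
      exact ⟨log u, by simpa [log_re] using Real.log_lt_log hr hu, exp_log hu0⟩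
  rw [← himage]
  exact (convex_halfSpace_re_gt _).isPreconnected.image _ continuous_exp.continuousOn

lemma exists_sq_eq_norm_sub_le (w z : ℂ) : ∃ s : ℂ, s ^ 2 = w ∧ ‖z - s‖ ≤ ‖z + s‖ := by
  obtain ⟨s, hs⟩ := IsAlgClosed.exists_pow_nat_eq w two_pos
  rcases le_total ‖z - s‖ ‖z + s‖ with h | h
  · exact ⟨s, hs, h⟩
  · exact ⟨-s, by rwa [neg_sq], by rwa [sub_neg_eq_add, ← sub_eq_add_neg]⟩

lemma norm_ofReal_sub_lt_norm_ofReal_add {a b : ℝ} (ha : 0 < a) (hb : 0 < b) :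
    ‖(a - b : ℂ)‖ < ‖(a + b : ℂ)‖ := by
  norm_cast
  rw [Real.norm_eq_abs, Real.norm_of_nonneg (by positivity)]
  exact abs_lt.2 ⟨by linarith, by linarith⟩

section Joukowski

variable {a b : ℝ} {u z : ℂ}

lemma joukowski_swap_sq (a b : ℝ) (hu : u ≠ 0) :
    joukowski b a u ^ 2 = joukowski a b u ^ 2 - (a ^ 2 - b ^ 2) := by
  rw [joukowski, joukowski]
  field_simp
  ring

lemma continuousOn_joukowski (a b : ℝ) : ContinuousOn (joukowski a b) {u | u ≠ 0} := by
  unfold joukowski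
  fun_prop (disch := simp)

lemma joukowski_eq_add_mul_conj (a b : ℝ) (u : ℂ) :
    joukowski a b u = ((a + b) / 2 : ℝ) * u + ((a - b) / 2 / normSq u : ℝ) * conj u := by
  rw [joukowski, div_eq_mul_inv _ u, inv_def]
  push_cast
  ring

lemma joukowski_of_norm_eq_one (a b : ℝ) {w : ℂ} (hw : ‖w‖ = 1) :
    joukowski a b w = axisScale a b w := by
  rw [joukowski_eq_add_mul_conj, axisScale_apply, normSq_eq_norm_sq, hw, one_pow, div_one]

lemma joukowski_re (a b : ℝ) (u : ℂ) :
    (joukowski a b u).re = ((a + b) / 2 + (a - b) / 2 / normSq u) * u.re := by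
  rw [joukowski_eq_add_mul_conj, add_re, re_ofReal_mul, re_ofReal_mul, conj_re]
  ring

lemma joukowski_im (a b : ℝ) (u : ℂ) :
    (joukowski a b u).im = ((a + b) / 2 - (a - b) / 2 / normSq u) * u.im := by
  rw [joukowski_eq_add_mul_conj, add_im, im_ofReal_mul, im_ofReal_mul, conj_im]
  ring

lemma joukowski_mem_ellipse_iff (ha : a ≠ 0) (hb : b ≠ 0) (hu : u ≠ 0) :
    joukowski a b u ∈ ellipse a b ↔
      (‖u‖ ^ 2 - 1) * ((a + b) ^ 2 * ‖u‖ ^ 2 - (a - b) ^ 2) ≤ 0 := by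
  rw [Complex.sq_norm]
  have hn : 0 < normSq u := normSq_pos.2 hu
  have hfactor : (joukowski a b u).re ^ 2 / a ^ 2 + (joukowski a b u).im ^ 2 / b ^ 2 - 1 =
      (normSq u - 1) * ((a + b) ^ 2 * normSq u - (a - b) ^ 2) *
        ((u.re ^ 2 / a ^ 2 + u.im ^ 2 / b ^ 2) / (4 * normSq u ^ 2)) := by
    have him_sq : u.im ^ 2 = normSq u - u.re ^ 2 := by rw [normSq_apply]; ring
    rw [joukowski_re, joukowski_im, mul_pow, mul_pow, him_sq]
    field_simp
    ring
  have hpos : 0 < (u.re ^ 2 / a ^ 2 + u.im ^ 2 / b ^ 2) / (4 * normSq u ^ 2) := by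
    rcases ne_or_eq u.re 0 with hre0 | hre0
    · positivity
    · have : u.im ≠ 0 := fun him0 ↦ hu (Complex.ext hre0 him0)
      positivity
  rw [ellipse, mem_ofPred_eq, ← sub_nonpos, hfactor, ← not_lt, ← not_lt,
    mul_pos_iff_of_pos_right hpos]

lemma joukowski_notMem_ellipse (ha : 0 < a) (hb : 0 < b) (hu : 1 < ‖u‖) :
    joukowski a b u ∉ ellipse a b := by
  have hu0 : u ≠ 0 := norm_pos_iff.1 (one_pos.trans hu)
  have hu2 : 1 < ‖u‖ ^ 2 := one_lt_pow₀ hu two_ne_zero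
  rw [joukowski_mem_ellipse_iff ha.ne' hb.ne' hu0, not_le]
  exact mul_pos (by linarith) (by nlinarith [mul_pos ha hb])

lemma exists_joukowski_eq (ha : 0 < a) (hb : 0 < b) (hz : z ∉ ellipse a b) :
    ∃ u, 1 < ‖u‖ ∧ joukowski a b u = z := by
  obtain ⟨s, hs, hle⟩ := exists_sq_eq_norm_sub_le (z ^ 2 - (a ^ 2 - b ^ 2)) z
  have hab : (a + b : ℂ) ≠ 0 := by exact_mod_cast (add_pos ha hb).ne'
  have hprod : (z + s) * (z - s) = (a + b) * (a - b) := by linear_combination -hs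
  have hzs : z + s ≠ 0 := by
    intro h
    have h' : z - s = 0 := norm_le_zero_iff.1 (hle.trans (norm_le_zero_iff.2 h))
    have hz0 : z = 0 := by linear_combination (h + h') / 2
    exact hz (hz0 ▸ zero_mem_ellipse a b)
  have hu0 : (z + s) / (a + b) ≠ 0 := div_ne_zero hzs hab
  have hzu : joukowski a b ((z + s) / (a + b)) = z := by
    rw [joukowski]
    field_simp
    linear_combination -hprod
  refine ⟨(z + s) / (a + b), ?_, hzu⟩
  by_contra! hu
  rw [← hzu, joukowski_mem_ellipse_iff ha.ne' hb.ne' hu0] at hz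
  have hprod_norm : ‖z + s‖ * ‖z - s‖ = ‖(a + b : ℂ)‖ * ‖(a - b : ℂ)‖ := by
    rw [← norm_mul, hprod, norm_mul]
  have hnorm : ‖(a - b : ℂ)‖ ^ 2 ≤ ‖z + s‖ ^ 2 := calc
    ‖(a - b : ℂ)‖ ^ 2 ≤ ‖(a + b : ℂ)‖ * ‖(a - b : ℂ)‖ := by
      rw [sq]
      gcongr
      exact (norm_ofReal_sub_lt_norm_ofReal_add ha hb).le
    _ = ‖z + s‖ * ‖z - s‖ := hprod_norm.symm
    _ ≤ ‖z + s‖ ^ 2 := by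
      rw [sq]
      gcongr
  have hadd_sq : ‖(a + b : ℂ)‖ ^ 2 = (a + b) ^ 2 := by
    norm_cast
    exact sq_abs (a + b)
  have hsub_sq : ‖(a - b : ℂ)‖ ^ 2 = (a - b) ^ 2 := by
    norm_cast
    exact sq_abs (a - b)
  refine hz (mul_nonpos_of_nonpos_of_nonneg ?_ ?_)
  · exact sub_nonpos.2 (pow_le_one₀ (norm_nonneg _) hu)
  · rw [norm_div, div_pow, hadd_sq, mul_div_cancel₀ _ (by positivity), ← hsub_sq]
    exact sub_nonneg.2 hnorm

lemma joukowski_ne_zero (ha : 0 < a) (hb : 0 < b) (hu : 1 < ‖u‖) : joukowski a b u ≠ 0 :=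
  fun h ↦ joukowski_notMem_ellipse ha hb hu (h ▸ zero_mem_ellipse a b)

lemma re_joukowski_swap_div_joukowski_pos (ha : 0 < a) (hb : 0 < b) (hu : 1 < ‖u‖) :
    0 < (joukowski b a u / joukowski a b u).re := by
  have hn : 1 < normSq u := by
    rw [← Complex.sq_norm]
    exact one_lt_pow₀ hu two_ne_zero
  have hz : 0 < normSq (joukowski a b u) := normSq_pos.2 (joukowski_ne_zero ha hb hu)
  have hinner : (joukowski b a u).re * (joukowski a b u).re +
      (joukowski b a u).im * (joukowski a b u).im =
        ((a + b) ^ 2 * normSq u ^ 2 - (a - b) ^ 2) / (4 * normSq u) := by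
    have him_sq : u.im ^ 2 = normSq u - u.re ^ 2 := by rw [normSq_apply]; ring
    simp only [joukowski_re, joukowski_im]
    field_simp
    rw [him_sq]
    ring
  have hpos : 0 < (a + b) ^ 2 * normSq u ^ 2 - (a - b) ^ 2 := by
    nlinarith [mul_pos ha hb, one_lt_pow₀ hn two_ne_zero]
  rw [div_re, ← add_div, hinner]
  positivity

lemma one_sub_div_joukowski_sq (ha : 0 < a) (hb : 0 < b) (hu : 1 < ‖u‖) :
    1 - (a ^ 2 - b ^ 2) / joukowski a b u ^ 2 = (joukowski b a u / joukowski a b u) ^ 2 := by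
  have hz := joukowski_ne_zero ha hb hu
  rw [div_pow, joukowski_swap_sq a b (norm_pos_iff.1 (one_pos.trans hu))]
  field_simp

lemma sqrtSqSub_joukowski (ha : 0 < a) (hb : 0 < b) (hu : 1 < ‖u‖) :
    sqrtSqSub (a ^ 2 - b ^ 2) (joukowski a b u) = joukowski b a u := by
  rw [sqrtSqSub, one_sub_div_joukowski_sq ha hb hu, Complex.sqrt,
    sq_cpow_two_inv (re_joukowski_swap_div_joukowski_pos ha hb hu),
    mul_div_cancel₀ _ (joukowski_ne_zero ha hb hu)]

lemma one_sub_div_sq_mem_slitPlane (ha : 0 < a) (hb : 0 < b) (hz : z ∉ ellipse a b) :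
    1 - (a ^ 2 - b ^ 2) / z ^ 2 ∈ slitPlane := by
  obtain ⟨u, hu, rfl⟩ := exists_joukowski_eq ha hb hz
  rw [one_sub_div_joukowski_sq ha hb hu]
  exact sq_mem_slitPlane_of_re_pos (re_joukowski_swap_div_joukowski_pos ha hb hu)

lemma circleAverage_inv_joukowski_sub (ha : 0 < a) (hb : 0 < b) (hu : 1 < ‖u‖) :
    Real.circleAverage (fun w ↦ (joukowski a b u - joukowski a b w)⁻¹) 0 1 =
      (joukowski b a u)⁻¹ := by
  have hu0 : u ≠ 0 := norm_pos_iff.1 (one_pos.trans hu)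
  have hab : (a + b : ℂ) ≠ 0 := by exact_mod_cast (add_pos ha hb).ne'
  set q : ℂ := (a - b) / ((a + b) * u) with hq
  have hq_mem : q ∈ ball (0 : ℂ) 1 := by
    have hlt := norm_ofReal_sub_lt_norm_ofReal_add ha hb
    rw [mem_ball_zero_iff, hq, norm_div, norm_mul, div_lt_one (by positivity)]
    nlinarith [norm_nonneg (a + b : ℂ)]
  have hd : DifferentiableOn ℂ (fun w ↦ ((a + b) / 2 * (u - w))⁻¹) (closedBall 0 1) := by
    intro w hw
    have hne : (a + b) / 2 * (u - w) ≠ 0 := by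
      refine mul_ne_zero (div_ne_zero hab two_ne_zero) (sub_ne_zero.2 ?_)
      rintro rfl
      exact hu.not_ge (mem_closedBall_zero_iff.1 hw)
    exact DifferentiableAt.differentiableWithinAt (by fun_prop (disch := assumption))
  have hfactor : EqOn (fun w ↦ (w - 0)⁻¹ • (joukowski a b u - joukowski a b w)⁻¹)
      (fun w ↦ (w - q)⁻¹ • ((a + b) / 2 * (u - w))⁻¹) (sphere 0 1) := by
    intro w hw
    have hw0 : w ≠ 0 := ne_zero_of_mem_unit_sphere ⟨w, hw⟩
    simp only [smul_eq_mul, ← mul_inv, joukowski, hq, sub_zero]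
    congr 1
    field_simp
    ring
  rw [Real.circleAverage_eq_circleIntegral one_ne_zero,
    circleIntegral.integral_congr zero_le_one hfactor, hd.circleIntegral_sub_inv_smul hq_mem,
    smul_smul, inv_mul_cancel₀ two_pi_I_ne_zero, one_smul, joukowski, hq]
  congr 1
  field_simp
  ring

lemma circleAverage_inv_sub_axisScale (ha : 0 < a) (hb : 0 < b) (hz : z ∉ ellipse a b) :
    Real.circleAverage (fun w ↦ (z - axisScale a b w)⁻¹) 0 1 =
      (sqrtSqSub (a ^ 2 - b ^ 2) z)⁻¹ := by
  obtain ⟨u, hu, rfl⟩ := exists_joukowski_eq ha hb hz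
  rw [sqrtSqSub_joukowski ha hb hu, ← circleAverage_inv_joukowski_sub ha hb hu]
  refine Real.circleAverage_congr_sphere fun w hw ↦ ?_
  rw [abs_one, mem_sphere_zero_iff_norm] at hw
  simp only [joukowski_of_norm_eq_one a b hw]

lemma circleAverage_inv_sub_axisScale_of_le_one (ha : 0 < a) (hb : 0 < b) (hz : z ∉ ellipse a b)
    {r : ℝ} (hr : 0 < r) (hr1 : r ≤ 1) :
    Real.circleAverage (fun w ↦ (z - axisScale a b w)⁻¹) 0 r =
      (sqrtSqSub (r ^ 2 * (a ^ 2 - b ^ 2)) z)⁻¹ := by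
  have hzr : z ∉ ellipse (r * a) (r * b) := fun h ↦
    hz (ellipse_mono (by positivity) (mul_le_of_le_one_left ha.le hr1) (by positivity)
      (mul_le_of_le_one_left hb.le hr1) h)
  have h := circleAverage_inv_sub_axisScale (mul_pos hr ha) (mul_pos hr hb) hzr
  simp only [axisScale_mul_mul, ofReal_mul, mul_pow, ← mul_sub] at h
  simpa [Real.circleAverage_eq_circleAverage_zero_one (R := r)] using h

end Joukowski

lemma axisScale_mem_ellipse_iff {a b : ℝ} (ha : a ≠ 0) (hb : b ≠ 0) {w : ℂ} :
    axisScale a b w ∈ ellipse a b ↔ w ∈ closedBall 0 1 := by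
  have h : (axisScale a b w).re ^ 2 / a ^ 2 + (axisScale a b w).im ^ 2 / b ^ 2 = ‖w‖ ^ 2 := by
    rw [axisScale_re, axisScale_im, Complex.sq_norm, normSq_apply]
    field_simp
  rw [ellipse, mem_ofPred_eq, h, mem_closedBall_zero_iff, sq_le_one_iff₀ (norm_nonneg w)]

lemma axisScale_inv_axisScale {a b : ℝ} (ha : a ≠ 0) (hb : b ≠ 0) (w : ℂ) :
    axisScale a⁻¹ b⁻¹ (axisScale a b w) = w := by
  apply Complex.ext <;> simp [axisScale_re, axisScale_im, ha, hb]

lemma axisScale_bijective {a b : ℝ} (ha : a ≠ 0) (hb : b ≠ 0) :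
    Function.Bijective (axisScale a b) :=
  Function.bijective_iff_has_inverse.2 ⟨axisScale a⁻¹ b⁻¹, axisScale_inv_axisScale ha hb,
    fun w ↦ by simpa using axisScale_inv_axisScale (inv_ne_zero ha) (inv_ne_zero hb) w⟩

lemma setIntegral_ellipse {E : Type*} [NormedAddCommGroup E] [NormedSpace ℝ E] {a b : ℝ}
    (ha : a ≠ 0) (hb : b ≠ 0) (f : ℂ → E) :
    ∫ ζ in ellipse a b, f ζ = |a * b| • ∫ w in closedBall 0 1, f (axisScale a b w) := by
  have hbij := axisScale_bijective ha hb
  have himage : ellipse a b = axisScale a b '' closedBall 0 1 := by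
    rw [← image_preimage_eq (ellipse a b) hbij.surjective]
    congr 1 with w
    exact axisScale_mem_ellipse_iff ha hb
  rw [himage, integral_image_eq_integral_abs_det_fderiv_smul volume
    isClosed_closedBall.measurableSet (fun w _ ↦ (axisScale a b).hasFDerivWithinAt)
    hbij.injective.injOn, integral_smul, det_axisScale]

section CauchyTransform

variable {a b : ℝ} {z : ℂ}

lemma setIntegral_ellipse_inv_sub (ha : 0 < a) (hb : 0 < b) (hz : z ∉ ellipse a b) :
    ∫ ζ in ellipse a b, (z - ζ)⁻¹ =
      2 * π * a * b / (z + sqrtSqSub (a ^ 2 - b ^ 2) z) := by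
  have hcont : ContinuousOn (fun w ↦ (z - axisScale a b w)⁻¹) (closedBall 0 1) := by
    refine ContinuousOn.inv₀ (by fun_prop) fun w hw h ↦ hz ?_
    rw [sub_eq_zero.1 h]
    exact (axisScale_mem_ellipse_iff ha.ne' hb.ne').2 hw
  have hslice : EqOn
      (fun r : ℝ ↦ (2 * π * r) • Real.circleAverage (fun w ↦ (z - axisScale a b w)⁻¹) 0 r)
      (fun r : ℝ ↦ 2 * π / z * (r / Complex.sqrt (1 - (a ^ 2 - b ^ 2) / z ^ 2 * r ^ 2)))
      (Ioc 0 1) := by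
    intro r hr
    simp only [circleAverage_inv_sub_axisScale_of_le_one ha hb hz hr.1 hr.2, sqrtSqSub, mul_inv,
      real_smul, ofReal_mul, ofReal_ofNat]
    ring_nf
  rw [setIntegral_ellipse ha.ne' hb.ne',
    setIntegral_closedBall_eq_integral_circleAverage zero_le_one hcont,
    intervalIntegral.integral_of_le zero_le_one, setIntegral_congr_fun measurableSet_Ioc hslice,
    ← intervalIntegral.integral_of_le zero_le_one, intervalIntegral.integral_const_mul,
    integral_div_sqrt_one_sub_mul_sq (one_sub_div_sq_mem_slitPlane ha hb hz),
    abs_of_pos (mul_pos ha hb), real_smul, sqrtSqSub, ofReal_mul, ← mul_one_add]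
  simp only [div_eq_mul_inv, mul_inv]
  ring

lemma eq_sqrtSqSub_of_continuousOn (ha : 0 < a) (hb : 0 < b) {g : ℂ → ℂ}
    (hg : ContinuousOn g (ellipse a b)ᶜ)
    (hg2 : ∀ z ∉ ellipse a b, g z ^ 2 = z ^ 2 - (a ^ 2 - b ^ 2))
    {x : ℝ} (hx : a < x) (hgx : 0 < (g x).re) (hz : z ∉ ellipse a b) :
    g z = sqrtSqSub (a ^ 2 - b ^ 2) z := by
  have hout : ∀ u ∈ {u : ℂ | 1 < ‖u‖}, joukowski a b u ∈ (ellipse a b)ᶜ := fun u hu ↦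
    joukowski_notMem_ellipse ha hb hu
  have hne : ∀ u ∈ {u : ℂ | 1 < ‖u‖}, u ≠ 0 := fun u hu ↦ norm_pos_iff.1 (one_pos.trans hu)
  have hsq : EqOn ((g ∘ joukowski a b) ^ 2) (joukowski b a ^ 2) {u | 1 < ‖u‖} := fun u hu ↦ by
    simp only [Pi.pow_apply, Function.comp_apply]
    rw [hg2 _ (hout u hu), joukowski_swap_sq a b (hne u hu)]
  have hx0 : 0 < x := ha.trans hx
  have hx_out : (x : ℂ) ∉ ellipse a b := by
    simpa [ellipse, div_le_one, ha] using pow_lt_pow_left₀ hx ha.le two_ne_zero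
  obtain ⟨v, hv, hvx⟩ := exists_joukowski_eq ha hb hx_out
  have hv_re : 0 < (joukowski b a v).re := by
    have h := re_joukowski_swap_div_joukowski_pos ha hb hv
    rwa [hvx, div_ofReal_re, div_pos_iff_of_pos_right hx0] at h
  have hgv : g (joukowski a b v) = joukowski b a v := by
    refine (sq_eq_sq_iff_eq_or_eq_neg.1 (hsq hv)).resolve_right fun h ↦ ?_
    simp only [Function.comp_apply, hvx] at h
    rw [h, neg_re] at hgx
    linarith
  obtain ⟨u, hu, rfl⟩ := exists_joukowski_eq ha hb hz
  rw [sqrtSqSub_joukowski ha hb hu]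
  exact (isPreconnected_setOf_lt_norm one_pos).eq_of_sq_eq
    (hg.comp (continuousOn_joukowski a b |>.mono hne) hout)
    (continuousOn_joukowski b a |>.mono hne) hsq (fun hu ↦ joukowski_ne_zero hb ha hu) hv hgv hu

theorem cauchy_transform_ellipse_outside_general (ha : 0 < a) (hb : 0 < b) {g : ℂ → ℂ}
    (hg : ContinuousOn g (ellipse a b)ᶜ)
    (hg2 : ∀ z ∉ ellipse a b, g z ^ 2 = z ^ 2 - (a ^ 2 - b ^ 2))
    {x : ℝ} (hx : a < x) (hgx : 0 < (g x).re) (hz : z ∉ ellipse a b) :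
    (π : ℂ)⁻¹ * ∫ ζ in ellipse a b, (z - ζ)⁻¹ = 2 * a * b / (z + g z) := by
  have hπ : (π : ℂ) ≠ 0 := ofReal_ne_zero.2 Real.pi_ne_zero
  rw [setIntegral_ellipse_inv_sub ha hb hz, eq_sqrtSqSub_of_continuousOn ha hb hg hg2 hx hgx hz]
  field_simp

end CauchyTransform

lemma image_ofReal_Icc_subset_ellipse {a b : ℝ} (hb : 0 < b) (hab : b < a) :
    ofReal '' Icc (-√(a ^ 2 - b ^ 2)) √(a ^ 2 - b ^ 2) ⊆ ellipse a b := by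
  rintro _ ⟨x, hx, rfl⟩
  have hx2 : x ^ 2 ≤ a ^ 2 - b ^ 2 := (Real.sq_le (by nlinarith)).2 ⟨hx.1, hx.2⟩
  have : x ^ 2 / a ^ 2 ≤ 1 := div_le_one_of_le₀ (by nlinarith) (sq_nonneg a)
  simpa [ellipse] using this

/-- The Cauchy transform of the uniform density `1/π` on the ellipse with semi-axes
`a > b > 0`, evaluated outside the ellipse, equals `(2ab/c²)(z - √(z² - c²))`, where
`c` is the focal distance and the square root is the branch on the complement of the
focal segment `[-c, c]` that is positive on `(c, ∞)`. -/
theorem cauchy_transform_ellipse_outside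
    (a b : ℝ) (hb : 0 < b) (hab : b < a)
    (c : ℝ) (hc : c = Real.sqrt (a ^ 2 - b ^ 2))
    (Ω : Set ℂ) (hΩ : Ω = {p : ℂ | p.re ^ 2 / a ^ 2 + p.im ^ 2 / b ^ 2 ≤ 1})
    (K : Set ℂ) (hK : K = Complex.ofReal '' Set.Icc (-c) c)
    (g : ℂ → ℂ) (hg : DifferentiableOn ℂ g Kᶜ)
    (hg2 : ∀ z ∉ K, g z ^ 2 = z ^ 2 - (c : ℂ) ^ 2)
    (hgpos : ∀ x : ℝ, c < x → (g x).im = 0 ∧ 0 < (g x).re)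
    (z : ℂ) (hz : z ∉ Ω) :
    (Real.pi : ℂ)⁻¹ * (∫ ζ in Ω, (z - ζ)⁻¹)
      = ((2 * a * b / c ^ 2 : ℝ) : ℂ) * (z - g z) := by
  subst hc hK
  obtain rfl : Ω = ellipse a b := hΩ
  have ha : 0 < a := hb.trans hab
  have hk : 0 < a ^ 2 - b ^ 2 := sub_pos.2 (pow_lt_pow_left₀ hab hb.le two_ne_zero)
  have hca : √(a ^ 2 - b ^ 2) < a + 1 :=
    (Real.sqrt_lt' (by positivity)).2 (by linarith [sq_nonneg b])
  have hKΩ := compl_subset_compl.2 (image_ofReal_Icc_subset_ellipse hb hab)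
  have hc2 : ((√(a ^ 2 - b ^ 2) : ℝ) : ℂ) ^ 2 = a ^ 2 - b ^ 2 := by
    exact_mod_cast Real.sq_sqrt hk.le
  have hgz : (z - g z) * (z + g z) = a ^ 2 - b ^ 2 := by
    linear_combination hc2 - hg2 z (hKΩ hz)
  have hk0 : (a ^ 2 - b ^ 2 : ℂ) ≠ 0 := by exact_mod_cast hk.ne'
  rw [cauchy_transform_ellipse_outside_general ha hb (hg.continuousOn.mono hKΩ)
    (fun w hw ↦ hc2 ▸ hg2 w (hKΩ hw)) (lt_add_one a) (hgpos _ hca).2 hz, Real.sq_sqrt hk.le,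
    div_eq_iff (right_ne_zero_of_mul (hgz ▸ hk0)), mul_assoc _ (z - g z), hgz]
  push_cast
  rw [div_mul_cancel₀ _ hk0]
end
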